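/- Let τ ∈ (0, 1/10), let f : ℝ² → ℝ satisfy f(0,0) = 0 and f(M(t,θ)) = exp(t/τ) for all (t,θ) ∈ ℝ², and let k be the largest natural number with k < 1/τ (i.e. k < 1/τ ≤ k + 1). Then f is not (k+1) times continuously differentiable on ℝ². -/

import Mathlib

open Real

/-!
Write `p = 1 / τ` and `n = k + 1`, so `n - 1 < p ≤ n`. The map `M` is the flow
`t ↦ e^t R(t)` (`R` the rotation) applied to the ellipse `(√2 cos θ, sin θ)`, so a full turn
gives the discrete scaling law `f (e^{2π} x) = e^{2πp} f x`.

Suppose `f` is `C^n` and restrict it to the vertical axis: `g r = f (0, r)`. Differentiating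
`g (e^{2π} r) = e^{2πp} g r` at `0` shows that the derivatives of order `j < n` vanish
there (`e^{2πj} ≠ e^{2πp}` as `j < p`), so by Taylor's theorem `g r / r ^ n` has a limit as `r → 0`
(`tendsto_div_pow_of_scaling`). This limit is computed along two sequences. On `r = e^{-2πm}` (the
short axis of the ellipse) the quotient is `q m = e^{2πm(n-p)} ≥ 1`; on `r = √2 e^{π/2-2πm}`
(the long axis after a quarter turn) it is `C * q m`, where
`C = e^{(p-n)π/2} / √2 ^ n < 1`. Both cannot converge to the same limit, which is at least `1`.
-/

open Filter Topology in
/-- A `C^n` function satisfying `g (L r) = Λ g r`, where `Λ` is not one of `L ^ j`, `j < n`, has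
vanishing derivatives of order `< n` at `0`, hence `g r / r ^ n` converges as `r → 0`. -/
lemma tendsto_div_pow_of_scaling {g : ℝ → ℝ} {n : ℕ} {L Λ : ℝ} (hg : ContDiff ℝ n g)
    (hscale : ∀ r, g (L * r) = Λ * g r) (hne : ∀ j < n, L ^ j ≠ Λ) :
    ∃ a, Tendsto (fun r => g r / r ^ n) (𝓝[≠] 0) (𝓝 a) := by
  have hzero : ∀ j < n, iteratedDeriv j g 0 = 0 := by
    intro j hj
    have hgj : ContDiff ℝ j g := hg.of_le (by exact_mod_cast hj.le)
    have h1 := congrFun (iteratedDeriv_comp_const_mul hgj L) 0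
    have h2 : (fun x => g (L * x)) = fun x => Λ * g x := funext hscale
    rw [h2, iteratedDeriv_const_mul_field] at h1
    simp only [mul_zero] at h1
    have h3 : (L ^ j - Λ) * iteratedDeriv j g 0 = 0 := by linarith
    exact (mul_eq_zero.mp h3).resolve_left (sub_ne_zero.mpr (hne j hj))
  have htaylor : ∀ r, taylorWithinEval g n Set.univ 0 r
      = (n.factorial : ℝ)⁻¹ * r ^ n * iteratedDeriv n g 0 := by
    intro r
    rw [taylor_within_apply, Finset.sum_range_succ, Finset.sum_eq_zero]
    · simp [iteratedDerivWithin_univ]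
    · intro j hj
      rw [iteratedDerivWithin_univ, hzero j (Finset.mem_range.mp hj), smul_zero]
  have ho := (taylor_isLittleO_univ (x₀ := 0) hg).tendsto_div_nhds_zero
  refine ⟨(n.factorial : ℝ)⁻¹ * iteratedDeriv n g 0, ?_⟩
  have h := (ho.mono_left (nhdsWithin_le_nhds (s := {0}ᶜ))).add_const
    ((n.factorial : ℝ)⁻¹ * iteratedDeriv n g 0)
  rw [zero_add] at h
  refine h.congr' ?_
  filter_upwards [self_mem_nhdsWithin] with r hr
  have hr' : r ≠ 0 := hr
  rw [htaylor, sub_zero]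
  field_simp
  ring

lemma exists_cos_sin_eq {a b : ℝ} (h : a ^ 2 + b ^ 2 = 1) :
    ∃ θ : ℝ, cos θ = a ∧ sin θ = b := by
  have hn : ‖(⟨a, b⟩ : ℂ)‖ = 1 := by
    rw [Complex.norm_def, Complex.normSq_mk, ← sq, ← sq, h, sqrt_one]
  have h0 : (⟨a, b⟩ : ℂ) ≠ 0 := by
    intro h0
    rw [h0, norm_zero] at hn
    norm_num at hn
  refine ⟨Complex.arg ⟨a, b⟩, ?_, ?_⟩
  · rw [Complex.cos_arg h0, hn, div_one]
  · rw [Complex.sin_arg, hn, div_one]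

/-- Every nonzero point of the vertical axis is of the form `M t θ`. Rotating `(0, r)` back by `t`
and rescaling, it lands on the ellipse exactly when
`r ^ 2 * (sin t ^ 2 / 2 + cos t ^ 2) = e^{2t}`, which has a solution `t` by the
intermediate value theorem. -/
lemma exists_param_vertical {r : ℝ} (hr : r ≠ 0) : ∃ t θ : ℝ,
    exp t * (√2 * cos t * cos θ - sin t * sin θ) = 0 ∧
    exp t * (√2 * sin t * cos θ + cos t * sin θ) = r := by
  have hr2 : 0 < r ^ 2 := by positivity
  have habs : 0 < |r| := abs_pos.mpr hr
  let F : ℝ → ℝ := fun t => r ^ 2 * (sin t ^ 2 / 2 + cos t ^ 2) - exp t ^ 2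
  have hF : Continuous F := by fun_prop
  -- The factor `sin t ^ 2 / 2 + cos t ^ 2` lies in `[1/2, 1]`, so `F` changes sign on this interval.
  have h1 : F (log |r|) ≤ 0 := by
    simp only [F]
    rw [exp_log habs, sq_abs]
    nlinarith [sin_sq_add_cos_sq (log |r|), sq_nonneg (sin (log |r|))]
  have h2 : 0 ≤ F (log (|r| / 2)) := by
    simp only [F]
    rw [exp_log (by positivity), div_pow, sq_abs]
    nlinarith [sin_sq_add_cos_sq (log (|r| / 2)), sq_nonneg (cos (log (|r| / 2)))]
  obtain ⟨t, ht⟩ : ∃ t, F t = 0 := mem_range_of_exists_le_of_exists_ge hF ⟨_, h1⟩ ⟨_, h2⟩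
  have he : exp t ≠ 0 := (exp_pos t).ne'
  have hs : √2 ^ 2 = 2 := sq_sqrt (by norm_num)
  have hs0 : √2 ≠ 0 := by positivity
  have hcirc : (r * sin t / (√2 * exp t)) ^ 2 + (r * cos t / exp t) ^ 2 = 1 := by
    simp only [F] at ht
    rw [div_pow, div_pow, mul_pow √2, hs]
    field_simp
    linarith
  obtain ⟨θ, hc, hsn⟩ := exists_cos_sin_eq hcirc
  refine ⟨t, θ, ?_, ?_⟩
  · rw [hc, hsn]
    field_simp
    ring
  · rw [hc, hsn]
    field_simp
    exact sin_sq_add_cos_sq t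

open Filter Topology in
theorem constructed_function_not_Ck_plus_one (τ : ℝ) (hτ : τ ∈ Set.Ioo (0:ℝ) (1/10))
    (M : ℝ → ℝ → ℝ × ℝ)
    (hM : ∀ t θ, M t θ =
      (Real.exp t * (Real.sqrt 2 * Real.cos t * Real.cos θ - Real.sin t * Real.sin θ),
       Real.exp t * (Real.sqrt 2 * Real.sin t * Real.cos θ + Real.cos t * Real.sin θ)))
    (f : ℝ × ℝ → ℝ)
    (hf0 : f (0, 0) = 0)
    (hfM : ∀ t θ, f (M t θ) = Real.exp (t / τ))
    (k : ℕ) (hk : (k : ℝ) < 1 / τ) (hk' : 1 / τ ≤ (k : ℝ) + 1) :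
    ¬ ContDiff ℝ (k + 1 : ℕ) f := by
  intro hf
  obtain ⟨p, hp⟩ : ∃ p, p = 1 / τ := ⟨_, rfl⟩
  rw [← hp] at hk hk'
  replace hfM : ∀ t θ, f (M t θ) = exp (t * p) := by
    intro t θ
    rw [hfM, hp, mul_one_div]
  have hg : ContDiff ℝ (k + 1 : ℕ) fun r : ℝ => f (0, r) :=
    hf.comp (contDiff_const.prodMk contDiff_id)
  have hscale : ∀ r : ℝ, f (0, exp (2 * π) * r) = exp (2 * π * p) * f (0, r) := by
    intro r
    rcases eq_or_ne r 0 with rfl | hr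
    · simp [hf0]
    obtain ⟨t, θ, h1, h2⟩ := exists_param_vertical hr
    have e1 : M t θ = (0, r) := by rw [hM, h1, h2]
    have e2 : M (t + 2 * π) θ = (0, exp (2 * π) * r) := by
      rw [hM, cos_add_two_pi, sin_add_two_pi, exp_add]
      refine Prod.ext ?_ ?_
      · linear_combination exp (2 * π) * h1
      · linear_combination exp (2 * π) * h2
    rw [← e1, ← e2, hfM, hfM, ← exp_add]
    ring_nf
  obtain ⟨a, ha⟩ := tendsto_div_pow_of_scaling hg hscale (by
    intro j hj h
    rw [← exp_nat_mul, exp_eq_exp] at h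
    have hjk : (j : ℝ) ≤ k := by exact_mod_cast Nat.lt_succ_iff.mp hj
    nlinarith [pi_pos])
  -- Any sequence `c * e^{-2πm}` with `c ≠ 0` may be used to compute the limit `a`.
  have hseq : ∀ c : ℝ, c ≠ 0 →
      Tendsto (fun m : ℕ => c * exp (-(m * (2 * π)))) atTop (𝓝[≠] 0) := by
    intro c hc
    refine tendsto_nhdsWithin_iff.mpr ⟨?_, Eventually.of_forall fun m => ?_⟩
    · rw [← mul_zero c]
      refine Tendsto.const_mul c (tendsto_exp_neg_atTop_nhds_zero.comp ?_)
      exact tendsto_natCast_atTop_atTop.atTop_mul_const (by positivity)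
    · exact mul_ne_zero hc (exp_pos _).ne'
  let q : ℕ → ℝ := fun m => exp (m * (2 * π) * (k + 1 - p))
  have hq1 : Tendsto q atTop (𝓝 a) := by
    refine (ha.comp (hseq 1 one_ne_zero)).congr fun m => ?_
    have e : ((0 : ℝ), 1 * exp (-(m * (2 * π)))) = M (-(m * (2 * π))) (π / 2) := by
      rw [hM, cos_neg, sin_neg, cos_nat_mul_two_pi, cos_pi_div_two, sin_pi_div_two,
        show sin (m * (2 * π)) = 0 by simpa using sin_add_nat_mul_two_pi 0 m]
      simp
    simp only [Function.comp, q]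
    rw [e, hfM, one_mul, ← exp_nat_mul, ← exp_sub]
    push_cast
    ring_nf
  let C : ℝ := exp ((p - (k + 1)) * (π / 2)) / √2 ^ (k + 1)
  have hq2 : Tendsto (fun m => C * q m) atTop (𝓝 a) := by
    refine (ha.comp (hseq (√2 * exp (π / 2)) (by positivity))).congr fun m => ?_
    have e : ((0 : ℝ), √2 * exp (π / 2) * exp (-(m * (2 * π))))
        = M (π / 2 - m * (2 * π)) 0 := by
      rw [hM, cos_sub_nat_mul_two_pi, sin_sub_nat_mul_two_pi, cos_pi_div_two, sin_pi_div_two,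
        sub_eq_add_neg, exp_add]
      simp
      ring
    simp only [Function.comp, q, C]
    rw [e, hfM, mul_assoc, mul_pow, ← exp_add, ← exp_nat_mul, div_mul_eq_mul_div, ← exp_add,
      mul_comm (√2 ^ (k + 1)), ← div_div, ← exp_sub]
    push_cast
    ring_nf
  have ha1 : 1 ≤ a := by
    refine ge_of_tendsto' hq1 fun m => one_le_exp ?_
    have : 0 ≤ (k : ℝ) + 1 - p := by linarith
    positivity
  have hCa : C * a = a := tendsto_nhds_unique (hq1.const_mul C) hq2
  have hC : C < 1 := by
    have h1 : exp ((p - (k + 1)) * (π / 2)) ≤ 1 :=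
      exp_le_one_iff.mpr (mul_nonpos_of_nonpos_of_nonneg (by linarith) (by positivity))
    have h2 : 1 < √2 ^ (k + 1) := one_lt_pow₀ (by
      rw [lt_sqrt zero_le_one]; norm_num) (Nat.succ_ne_zero k)
    exact (div_lt_one (by positivity)).mpr (h1.trans_lt h2)
  nlinarith
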